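/- Let d ≥ 2 and n ≥ 1 be integers, let u₀ ∈ ℝⁿ, and let b, r₀ > 0. Suppose f = f(r,u) is defined and continuous in r and continuously differentiable in u on the set {(r,u) ∈ [0,r₀) × ℝⁿ : |u − u₀| < b}. Then there exists r₁ > 0 such that the singular Cauchy problem (r^{d−1} u′)′ + r^{d−1} f(r,u) = 0 with u(0) = u₀ and u′(0) = 0 has exactly one solution u of class C² on [0, r₁). -/

import Mathlib

open Set Metric

/-- `u` is a `C²` solution on `[0, r₁)` of the singular Cauchy problem
`(r^{d-1} u')' + r^{d-1} f(r,u) = 0`, `u(0) = u₀`, `u'(0) = 0`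
(equivalently `u'' + ((d-1)/r) u' + f(r,u) = 0` for `0 < r < r₁`),
with values staying in the ball where `f` is defined.  One-sided derivatives
at `0` are taken within `[0,∞)`. -/
def IsC2Sol (d n : ℕ) (f : ℝ → EuclideanSpace ℝ (Fin n) → EuclideanSpace ℝ (Fin n))
    (u₀ : EuclideanSpace ℝ (Fin n)) (b r₁ : ℝ) (u : ℝ → EuclideanSpace ℝ (Fin n)) : Prop :=
  (∀ r ∈ Ico (0:ℝ) r₁, DifferentiableWithinAt ℝ u (Ici 0) r) ∧
  (∀ r ∈ Ico (0:ℝ) r₁, DifferentiableWithinAt ℝ (derivWithin u (Ici 0)) (Ici 0) r) ∧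
  ContinuousOn (derivWithin (derivWithin u (Ici 0)) (Ici 0)) (Ico 0 r₁) ∧
  u 0 = u₀ ∧ derivWithin u (Ici 0) 0 = 0 ∧
  (∀ r ∈ Ico (0:ℝ) r₁, u r ∈ ball u₀ b) ∧
  (∀ r ∈ Ioo (0:ℝ) r₁,
    derivWithin (derivWithin u (Ici 0)) (Ici 0) r
      + (((d:ℝ) - 1) / r) • derivWithin u (Ici 0) r + f r (u r) = 0)

section RadialOperator

variable {E : Type*} [NormedAddCommGroup E] [NormedSpace ℝ E]

/-- The weighted average `∫₀¹ τ^m g(sτ) dτ`, which for `s ≠ 0` equals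
`s^{-(m+1)} ∫₀ˢ t^m g(t) dt`. -/
noncomputable def radialAverage (m : ℕ) (g : ℝ → E) (s : ℝ) : E :=
  ∫ τ in (0:ℝ)..1, τ ^ m • g (s * τ)

/-- The radial potential `∫₀ʳ s ∫₀¹ τ^m g(sτ) dτ ds`: the solution of `U'' + (m/r) U' = g` with
`U(0) = 0`, `U'(0) = 0`. -/
noncomputable def radialPotential (m : ℕ) (g : ℝ → E) (r : ℝ) : E :=
  ∫ s in (0:ℝ)..r, s • radialAverage m g s

variable {m : ℕ} {g g₁ g₂ : ℝ → E}

lemma continuous_radialAverage (hg : Continuous g) : Continuous (radialAverage m g) := by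
  unfold radialAverage
  apply intervalIntegral.continuous_parametric_intervalIntegral_of_continuous'
  fun_prop

lemma pow_succ_smul_radialAverage (s : ℝ) :
    s ^ (m + 1) • radialAverage m g s = ∫ t in (0:ℝ)..s, t ^ m • g t := by
  have h := intervalIntegral.smul_integral_comp_mul_left (a := 0) (b := 1)
    (fun t => t ^ m • g t) s
  simp only [mul_zero, mul_one] at h
  rw [← h, radialAverage, pow_succ', mul_smul, ← intervalIntegral.integral_smul]
  simp only [mul_pow, mul_smul]

lemma norm_radialAverage_le {M : ℝ} (hM : ∀ t, ‖g t‖ ≤ M) (s : ℝ) :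
    ‖radialAverage m g s‖ ≤ M := by
  have h := intervalIntegral.norm_integral_le_of_norm_le_const (a := 0) (b := 1) (C := M)
    (f := fun τ : ℝ => τ ^ m • g (s * τ)) ?_
  · simpa [radialAverage] using h
  · intro τ hτ
    rw [uIoc_of_le zero_le_one] at hτ
    rw [norm_smul, norm_pow, Real.norm_of_nonneg hτ.1.le]
    calc τ ^ m * ‖g (s * τ)‖ ≤ 1 * ‖g (s * τ)‖ := by
          gcongr
          exact pow_le_one₀ hτ.1.le hτ.2
      _ ≤ M := by simpa using hM _

lemma radialAverage_sub (h₁ : Continuous g₁) (h₂ : Continuous g₂) (s : ℝ) :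
    radialAverage m (g₁ - g₂) s = radialAverage m g₁ s - radialAverage m g₂ s := by
  unfold radialAverage
  rw [← intervalIntegral.integral_sub]
  · simp [smul_sub]
  all_goals exact Continuous.intervalIntegrable (by fun_prop) _ _

lemma radialPotential_sub (h₁ : Continuous g₁) (h₂ : Continuous g₂) (r : ℝ) :
    radialPotential m (g₁ - g₂) r = radialPotential m g₁ r - radialPotential m g₂ r := by
  have c₁ := continuous_radialAverage (m := m) h₁
  have c₂ := continuous_radialAverage (m := m) h₂
  unfold radialPotential
  rw [← intervalIntegral.integral_sub]
  · simp [radialAverage_sub h₁ h₂, smul_sub]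
  all_goals exact Continuous.intervalIntegrable (by fun_prop) _ _

lemma norm_radialPotential_le {M R r : ℝ} (hM : ∀ t, ‖g t‖ ≤ M) (hr : r ∈ Icc 0 R) :
    ‖radialPotential m g r‖ ≤ M * R ^ 2 := by
  have hM0 : 0 ≤ M := (norm_nonneg _).trans (hM 0)
  have hR : 0 ≤ R := hr.1.trans hr.2
  have h := intervalIntegral.norm_integral_le_of_norm_le_const (a := 0) (b := r) (C := R * M)
    (f := fun s : ℝ => s • radialAverage m g s) ?_
  · refine h.trans ?_
    rw [sub_zero, abs_of_nonneg hr.1]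
    calc R * M * r ≤ R * M * R := by gcongr; exact hr.2
      _ = M * R ^ 2 := by ring
  · intro s hs
    rw [uIoc_of_le hr.1] at hs
    rw [norm_smul, Real.norm_of_nonneg hs.1.le]
    gcongr
    · exact hs.2.trans hr.2
    · exact norm_radialAverage_le hM s

variable [CompleteSpace E]

lemma radialAverage_zero : radialAverage m g 0 = ((m : ℝ) + 1)⁻¹ • g 0 := by
  simp [radialAverage, intervalIntegral.integral_smul_const]

lemma hasDerivAt_smul_radialAverage (hg : Continuous g) (s : ℝ) :
    HasDerivAt (fun s => s • radialAverage m g s) (g s - (m : ℝ) • radialAverage m g s) s := by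
  rcases eq_or_ne s 0 with rfl | hs
  · have hval : g 0 - (m : ℝ) • radialAverage m g 0 = radialAverage m g 0 := by
      have hm : (m : ℝ) + 1 ≠ 0 := by positivity
      have h : ((m : ℝ) + 1) • radialAverage m g 0 = g 0 := by
        rw [radialAverage_zero, smul_inv_smul₀ hm]
      rw [← h]
      module
    rw [hval, hasDerivAt_iff_tendsto_slope]
    refine ((continuous_radialAverage hg).tendsto 0 |>.mono_left nhdsWithin_le_nhds).congr' ?_
    filter_upwards [self_mem_nhdsWithin] with x hx
    have hx : x ≠ 0 := hx
    simp [slope_def_module, smul_smul, hx]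
  · have hQ : HasDerivAt (fun s => ∫ t in (0:ℝ)..s, t ^ m • g t) (s ^ m • g s) s :=
      intervalIntegral.integral_hasDerivAt_right (Continuous.intervalIntegrable (by fun_prop) _ _)
        (Continuous.stronglyMeasurableAtFilter (by fun_prop) _ _) (by fun_prop)
    have hp : HasDerivAt (fun s : ℝ => (s ^ m)⁻¹) (-(m * s ^ (m - 1)) / (s ^ m) ^ 2) s :=
      (hasDerivAt_pow m s).fun_inv (pow_ne_zero _ hs)
    have h := hp.smul hQ
    rw [← pow_succ_smul_radialAverage, smul_smul, smul_smul] at h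
    convert h.congr_of_eventuallyEq ?_ using 1
    · rw [inv_mul_cancel₀ (pow_ne_zero _ hs), one_smul]
      have : -(m * s ^ (m - 1)) / (s ^ m) ^ 2 * s ^ (m + 1) = -(m : ℝ) := by
        rcases m with _ | k
        · simp
        · simp only [Nat.add_sub_cancel]
          field_simp
          ring
      rw [this]
      module
    · filter_upwards [isOpen_ne.mem_nhds hs] with x hx
      have hx : x ≠ 0 := hx
      simp only [Pi.smul_apply', ← pow_succ_smul_radialAverage, smul_smul]
      congr 1
      field_simp
      ring

lemma hasDerivAt_radialPotential (hg : Continuous g) (r : ℝ) :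
    HasDerivAt (radialPotential m g) (r • radialAverage m g r) r := by
  have c := continuous_radialAverage (m := m) hg
  exact intervalIntegral.integral_hasDerivAt_right (Continuous.intervalIntegrable (by fun_prop) _ _)
    (Continuous.stronglyMeasurableAtFilter (by fun_prop) _ _) (by fun_prop)

end RadialOperator

/-- The integral equation for the singular Cauchy problem, solved by Banach's fixed point theorem.
The unknown is the source term `g(r) = f(r, u(r))`. -/
lemma exists_radialPotential_fixedPoint {E : Type*} [NormedAddCommGroup E] [NormedSpace ℝ E]
    [CompleteSpace E] (m : ℕ) {f : ℝ → E → E} {u₀ : E} {c R M L : ℝ} (hc : 0 ≤ c) (hR : 0 ≤ R)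
    (hfC : ContinuousOn (fun p : ℝ × E => f p.1 p.2) (Icc 0 R ×ˢ closedBall u₀ c))
    (hM : ∀ r ∈ Icc 0 R, ∀ x ∈ closedBall u₀ c, ‖f r x‖ ≤ M)
    (hL0 : 0 ≤ L)
    (hL : ∀ r ∈ Icc 0 R, ∀ x ∈ closedBall u₀ c, ∀ y ∈ closedBall u₀ c,
      ‖f r x - f r y‖ ≤ L * ‖x - y‖)
    (hMR : M * R ^ 2 ≤ c) (hLR : L * R ^ 2 ≤ 1 / 2) :
    ∃ g : ℝ → E, Continuous g ∧ ∀ r ∈ Icc 0 R,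
      u₀ - radialPotential m g r ∈ closedBall u₀ c ∧ g r = f r (u₀ - radialPotential m g r) := by
  let src : C(Icc 0 R, closedBall u₀ c) → ℝ → E := fun u t =>
    f (projIcc 0 R hR t) (u (projIcc 0 R hR t))
  have hsrc : ∀ u, Continuous (src u) := fun u =>
    hfC.comp_continuous (f := fun t => ((projIcc 0 R hR t : ℝ), (u (projIcc 0 R hR t) : E)))
      (by fun_prop) fun t => ⟨(projIcc 0 R hR t).2, (u _).2⟩
  have hsrcM : ∀ u t, ‖src u t‖ ≤ M := fun u t => hM _ (projIcc 0 R hR t).2 _ (u _).2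
  have hpot : ∀ u, Continuous (radialPotential m (src u)) := fun u =>
    continuous_iff_continuousAt.2 fun r => (hasDerivAt_radialPotential (hsrc u) r).continuousAt
  have hmem : ∀ u, ∀ r ∈ Icc 0 R, u₀ - radialPotential m (src u) r ∈ closedBall u₀ c := by
    intro u r hr
    rw [mem_closedBall, dist_eq_norm, sub_sub_cancel_left, norm_neg]
    exact (norm_radialPotential_le (hsrcM u) hr).trans hMR
  let T : C(Icc 0 R, closedBall u₀ c) → C(Icc 0 R, closedBall u₀ c) := fun u =>
    ⟨fun r => ⟨u₀ - radialPotential m (src u) r, hmem u r r.2⟩, by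
      have := hpot u
      fun_prop⟩
  have hT : ContractingWith (1 / 2) T := by
    refine ⟨by rw [← NNReal.coe_lt_coe]; norm_num, LipschitzWith.of_dist_le_mul fun u v => ?_⟩
    rw [ContinuousMap.dist_le (by positivity)]
    intro r
    have hsub : ∀ t, ‖(src v - src u) t‖ ≤ L * dist u v := by
      intro t
      refine (hL _ (projIcc 0 R hR t).2 _ (v _).2 _ (u _).2).trans ?_
      gcongr
      rw [← dist_eq_norm, dist_comm, ← Subtype.dist_eq]
      exact ContinuousMap.dist_apply_le_dist (f := u) (g := v) (projIcc 0 R hR t)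
    calc dist (T u r) (T v r) = ‖radialPotential m (src v - src u) r‖ := by
          rw [Subtype.dist_eq, dist_eq_norm, radialPotential_sub (hsrc v) (hsrc u)]
          congr 1
          exact sub_sub_sub_cancel_left _ _ _
      _ ≤ L * dist u v * R ^ 2 := norm_radialPotential_le hsub r.2
      _ = L * R ^ 2 * dist u v := by ring
      _ ≤ 1 / 2 * dist u v := by gcongr
      _ = _ := by norm_num
  have : Nonempty C(Icc 0 R, closedBall u₀ c) :=
    ⟨ContinuousMap.const _ ⟨u₀, mem_closedBall_self hc⟩⟩
  have : CompleteSpace (closedBall u₀ c) := isClosed_closedBall.completeSpace_coe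
  obtain ⟨u, hu⟩ : ∃ u, T u = u := ⟨_, hT.fixedPoint_isFixedPt⟩
  refine ⟨src u, hsrc u, fun r hr => ⟨hmem u r hr, ?_⟩⟩
  have hur : (u ⟨r, hr⟩ : E) = u₀ - radialPotential m (src u) r := by
    conv_lhs => rw [← hu]
    rfl
  rw [← hur]
  simp only [src, projIcc_of_mem hR hr]

/-- A map with jointly continuous derivative in the second variable is uniformly Lipschitz in that
variable on compact pieces of its domain. -/
lemma exists_lipschitz_bound {E : Type*} [NormedAddCommGroup E] [NormedSpace ℝ E]
    [ProperSpace E] {f : ℝ → E → E} {Df : ℝ → E → (E →L[ℝ] E)} {u₀ : E} {b r₀ c ρ : ℝ}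
    (hDf : ∀ r ∈ Ico (0:ℝ) r₀, ∀ w ∈ ball u₀ b, HasFDerivAt (f r) (Df r w) w)
    (hDfC : ContinuousOn (fun p : ℝ × E => Df p.1 p.2) (Ico 0 r₀ ×ˢ ball u₀ b))
    (hρ : ρ < r₀) (hc : c < b) :
    ∃ L, 0 ≤ L ∧ ∀ r ∈ Icc 0 ρ, ∀ x ∈ closedBall u₀ c, ∀ y ∈ closedBall u₀ c,
      ‖f r x - f r y‖ ≤ L * ‖x - y‖ := by
  have hsub : Icc 0 ρ ×ˢ closedBall u₀ c ⊆ Ico 0 r₀ ×ˢ ball u₀ b :=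
    prod_mono (Icc_subset_Ico_right hρ) (closedBall_subset_ball hc)
  obtain ⟨L, hL⟩ := (isCompact_Icc.prod (isCompact_closedBall u₀ c)).exists_bound_of_continuousOn
    (hDfC.mono hsub)
  refine ⟨max L 0, le_max_right _ _, fun r hr x hx y hy => ?_⟩
  refine (convex_closedBall u₀ c).norm_image_sub_le_of_norm_hasFDerivWithin_le
    (f' := Df r) (fun z hz => ?_) (fun z hz => ?_) hy hx
  · exact (hDf r (hsub (mk_mem_prod hr hz)).1 z
      (closedBall_subset_ball hc hz)).hasFDerivWithinAt
  · exact (hL (r, z) ⟨hr, hz⟩).trans (le_max_left _ _)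

/-- Uniqueness, by a Grönwall estimate for `‖u - w‖² + ‖u' - w'‖²`: the singular term has the
favourable sign. -/
lemma IsC2Sol.eqOn {d n : ℕ} (hd : 1 ≤ d)
    {f : ℝ → EuclideanSpace ℝ (Fin n) → EuclideanSpace ℝ (Fin n)}
    {u₀ : EuclideanSpace ℝ (Fin n)} {b r₁ : ℝ} {u w : ℝ → EuclideanSpace ℝ (Fin n)}
    (hL : ∀ ρ < r₁, ∀ c < b, ∃ L, 0 ≤ L ∧ ∀ r ∈ Icc 0 ρ,
      ∀ x ∈ closedBall u₀ c, ∀ y ∈ closedBall u₀ c, ‖f r x - f r y‖ ≤ L * ‖x - y‖)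
    (hu : IsC2Sol d n f u₀ b r₁ u) (hw : IsC2Sol d n f u₀ b r₁ w) : EqOn u w (Ico 0 r₁) := by
  obtain ⟨hu1, hu2, -, hu0, hu0', hub, hueq⟩ := hu
  obtain ⟨hw1, hw2, -, hw0, hw0', hwb, hweq⟩ := hw
  intro ρ hρ
  have hsub : Icc 0 ρ ⊆ Ico 0 r₁ := Icc_subset_Ico_right hρ.2
  have hcont : ∀ {v : ℝ → EuclideanSpace ℝ (Fin n)},
      (∀ r ∈ Ico (0:ℝ) r₁, DifferentiableWithinAt ℝ v (Ici 0) r) → ContinuousOn v (Icc 0 ρ) :=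
    fun h r hr => ((h r (hsub hr)).continuousWithinAt).mono Icc_subset_Ici_self
  have hderiv : ∀ {v : ℝ → EuclideanSpace ℝ (Fin n)},
      (∀ r ∈ Ico (0:ℝ) r₁, DifferentiableWithinAt ℝ v (Ici 0) r) →
      ∀ r ∈ Ioo 0 ρ, HasDerivAt v (derivWithin v (Ici 0) r) r :=
    fun h r hr => (h r (hsub (Ioo_subset_Icc_self hr))).hasDerivWithinAt.hasDerivAt
      (Ici_mem_nhds hr.1)
  obtain ⟨c, hcb, hc⟩ : ∃ c < b, ∀ r ∈ Icc 0 ρ, u r ∈ closedBall u₀ c ∧ w r ∈ closedBall u₀ c := by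
    have hmax : ContinuousOn (fun r => max (dist (u r) u₀) (dist (w r) u₀)) (Icc 0 ρ) := by
      have := hcont hu1
      have := hcont hw1
      fun_prop
    obtain ⟨s, hs, hsmax⟩ := isCompact_Icc.exists_isMaxOn (nonempty_Icc.2 hρ.1) hmax
    exact ⟨_, max_lt (hub s (hsub hs)) (hwb s (hsub hs)), fun r hr =>
      ⟨mem_closedBall.2 ((le_max_left _ _).trans (hsmax hr)),
        mem_closedBall.2 ((le_max_right _ _).trans (hsmax hr))⟩⟩
  obtain ⟨L, hL0, hL⟩ := hL ρ hρ.2 c hcb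
  set u' := derivWithin u (Ici 0)
  set w' := derivWithin w (Ici 0)
  set F : ℝ → ℝ := fun r =>
    Real.exp (-(1 + L) * r) * (‖u r - w r‖ ^ 2 + ‖u' r - w' r‖ ^ 2) with hF
  have hFcont : ContinuousOn F (Icc 0 ρ) := by
    have := hcont hu1
    have := hcont hw1
    have := hcont hu2
    have := hcont hw2
    fun_prop
  have hFderiv : ∀ r ∈ Ioo 0 ρ, ∃ F' ≤ 0, HasDerivAt F F' r := by
    intro r hr
    have hr' : r ∈ Ioo 0 r₁ := ⟨hr.1, hr.2.trans hρ.2⟩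
    have h0 := ((hderiv hu1 r hr).sub (hderiv hw1 r hr)).norm_sq
    have h1 := ((hderiv hu2 r hr).sub (hderiv hw2 r hr)).norm_sq
    have he : HasDerivAt (fun r : ℝ => Real.exp (-(1 + L) * r))
        (Real.exp (-(1 + L) * r) * (-(1 + L))) r := by
      simpa using ((hasDerivAt_id r).const_mul (-(1 + L))).exp
    refine ⟨_, ?_, he.mul (h0.add h1)⟩
    have hrr := Ioo_subset_Icc_self hr
    have hlip := hL r hrr (u r) (hc r hrr).1 (w r) (hc r hrr).2
    have hsing : 0 ≤ ((d:ℝ) - 1) / r :=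
      div_nonneg (sub_nonneg.2 (by exact_mod_cast hd)) hr.1.le
    have hdiff : derivWithin u' (Ici 0) r - derivWithin w' (Ici 0) r
        = -((((d:ℝ) - 1) / r) • (u' r - w' r)) - (f r (u r) - f r (w r)) := by
      have e := (hueq r hr').trans (hweq r hr').symm
      rw [← sub_eq_zero] at e ⊢
      rw [← e]
      module
    have i0 := real_inner_le_norm (u r - w r) (u' r - w' r)
    have i1 : inner ℝ (u' r - w' r) (derivWithin u' (Ici 0) r - derivWithin w' (Ici 0) r)
        ≤ L * (‖u r - w r‖ * ‖u' r - w' r‖) := by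
      rw [hdiff, inner_sub_right, inner_neg_right, real_inner_smul_right,
        real_inner_self_eq_norm_sq]
      have i2 := neg_le_of_abs_le (abs_real_inner_le_norm (u' r - w' r) (f r (u r) - f r (w r)))
      have i3 := mul_le_mul_of_nonneg_left hlip (norm_nonneg (u' r - w' r))
      have i4 := mul_nonneg hsing (sq_nonneg ‖u' r - w' r‖)
      linarith
    have i5 := mul_nonneg (by linarith : 0 ≤ 1 + L) (sq_nonneg (‖u r - w r‖ - ‖u' r - w' r‖))
    simp only [Pi.sub_apply] at *
    rw [mul_assoc, ← mul_add]
    refine mul_nonpos_of_nonneg_of_nonpos (Real.exp_nonneg _) ?_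
    change _ * _ + (2 * inner ℝ (u r - w r) (u' r - w' r) + _) ≤ 0
    nlinarith
  have hanti : AntitoneOn F (Icc 0 ρ) := by
    refine antitoneOn_of_deriv_nonpos (convex_Icc 0 ρ) hFcont ?_ ?_ <;> rw [interior_Icc] <;>
      intro r hr <;> obtain ⟨F', hF', h⟩ := hFderiv r hr
    · exact h.differentiableAt.differentiableWithinAt
    · rwa [h.deriv]
  have hFρ : F ρ ≤ 0 := by
    have h := hanti (left_mem_Icc.2 hρ.1) (right_mem_Icc.2 hρ.1) hρ.1
    simpa [hF, hu0, hw0, hu0', hw0'] using h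
  have hsq : ‖u ρ - w ρ‖ ^ 2 + ‖u' ρ - w' ρ‖ ^ 2 ≤ 0 :=
    nonpos_of_mul_nonpos_right hFρ (Real.exp_pos _)
  have : ‖u ρ - w ρ‖ = 0 := by
    nlinarith [sq_nonneg ‖u ρ - w ρ‖, sq_nonneg ‖u' ρ - w' ρ‖]
  exact sub_eq_zero.1 (norm_eq_zero.1 this)

/-- A solution of the integral equation is a `C²` solution of the singular Cauchy problem. -/
lemma isC2Sol_radialPotential {m n : ℕ}
    {f : ℝ → EuclideanSpace ℝ (Fin n) → EuclideanSpace ℝ (Fin n)}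
    {u₀ : EuclideanSpace ℝ (Fin n)} {b R : ℝ} {g : ℝ → EuclideanSpace ℝ (Fin n)}
    (hg : Continuous g) (hball : ∀ r ∈ Ico 0 R, u₀ - radialPotential m g r ∈ ball u₀ b)
    (hfix : ∀ r ∈ Ico 0 R, g r = f r (u₀ - radialPotential m g r)) :
    IsC2Sol (m + 1) n f u₀ b R (fun r => u₀ - radialPotential m g r) := by
  have hu : ∀ r, HasDerivAt (fun r => u₀ - radialPotential m g r) (-(r • radialAverage m g r)) r :=
    fun r => (hasDerivAt_radialPotential hg r).const_sub u₀
  have hu' : ∀ r, HasDerivAt (fun r => -(r • radialAverage m g r))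
      (-(g r - (m : ℝ) • radialAverage m g r)) r :=
    fun r => (hasDerivAt_smul_radialAverage hg r).fun_neg
  have e1 : EqOn (derivWithin (fun r => u₀ - radialPotential m g r) (Ici 0))
      (fun r => -(r • radialAverage m g r)) (Ici 0) :=
    fun r hr => (hu r).hasDerivWithinAt.derivWithin (uniqueDiffOn_Ici 0 r hr)
  have h2 : ∀ r ∈ Ici (0:ℝ), HasDerivWithinAt
      (derivWithin (fun r => u₀ - radialPotential m g r) (Ici 0))
      (-(g r - (m : ℝ) • radialAverage m g r)) (Ici 0) r :=
    fun r hr => (hu' r).hasDerivWithinAt.congr e1 (e1 hr)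
  have e2 : EqOn (derivWithin (derivWithin (fun r => u₀ - radialPotential m g r) (Ici 0)) (Ici 0))
      (fun r => -(g r - (m : ℝ) • radialAverage m g r)) (Ici 0) :=
    fun r hr => (h2 r hr).derivWithin (uniqueDiffOn_Ici 0 r hr)
  refine ⟨fun r _ => (hu r).differentiableAt.differentiableWithinAt,
    fun r hr => (h2 r hr.1).differentiableWithinAt, ?_, by simp [radialPotential],
    by simpa using e1 (mem_Ici.2 le_rfl), hball, fun r hr => ?_⟩
  · have c := continuous_radialAverage (m := m) hg
    exact (Continuous.continuousOn (by fun_prop)).congr (e2.mono Ico_subset_Ici_self)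
  · rw [e2 hr.1.le, e1 hr.1.le, ← hfix r ⟨hr.1.le, hr.2⟩]
    have : ((((m + 1 : ℕ) : ℝ) - 1) / r) • (-(r • radialAverage m g r))
        = -((m : ℝ) • radialAverage m g r) := by
      have := hr.1.ne'
      rw [smul_neg, smul_smul]
      congr 2
      push_cast
      field_simp
      ring
    rw [this]
    module

/-- Local existence and uniqueness for the singular Cauchy problem
`(r^{d-1}u')' + r^{d-1} f(r,u) = 0`, `u(0) = u₀`, `u'(0) = 0`. -/
theorem stmt0 (d n : ℕ) (hd : 2 ≤ d) (hn : 1 ≤ n)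
    (u₀ : EuclideanSpace ℝ (Fin n)) (b r₀ : ℝ) (hb : 0 < b) (hr₀ : 0 < r₀)
    (f : ℝ → EuclideanSpace ℝ (Fin n) → EuclideanSpace ℝ (Fin n))
    (Df : ℝ → EuclideanSpace ℝ (Fin n) →
      (EuclideanSpace ℝ (Fin n) →L[ℝ] EuclideanSpace ℝ (Fin n)))
    (hfC : ContinuousOn (fun p : ℝ × EuclideanSpace ℝ (Fin n) => f p.1 p.2)
      (Ico 0 r₀ ×ˢ ball u₀ b))
    (hDf : ∀ r ∈ Ico (0:ℝ) r₀, ∀ w ∈ ball u₀ b, HasFDerivAt (f r) (Df r w) w)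
    (hDfC : ContinuousOn (fun p : ℝ × EuclideanSpace ℝ (Fin n) => Df p.1 p.2)
      (Ico 0 r₀ ×ˢ ball u₀ b)) :
    ∃ r₁ : ℝ, 0 < r₁ ∧ r₁ ≤ r₀ ∧ ∃ u : ℝ → EuclideanSpace ℝ (Fin n),
      IsC2Sol d n f u₀ b r₁ u ∧
      ∀ w : ℝ → EuclideanSpace ℝ (Fin n), IsC2Sol d n f u₀ b r₁ w → EqOn u w (Ico 0 r₁) := by
  obtain ⟨m, rfl⟩ : ∃ m, d = m + 1 := ⟨d - 1, by omega⟩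
  have hcb : b / 2 < b := half_lt_self hb
  have hρ : r₀ / 2 < r₀ := half_lt_self hr₀
  have hfC' : ContinuousOn (fun p : ℝ × EuclideanSpace ℝ (Fin n) => f p.1 p.2)
      (Icc 0 (r₀ / 2) ×ˢ closedBall u₀ (b / 2)) :=
    hfC.mono (prod_mono (Icc_subset_Ico_right hρ) (closedBall_subset_ball hcb))
  obtain ⟨M, hM⟩ := (isCompact_Icc.prod
    (isCompact_closedBall u₀ (b / 2))).exists_bound_of_continuousOn hfC'
  obtain ⟨L, hL0, hL⟩ := exists_lipschitz_bound hDf hDfC hρ hcb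
  obtain ⟨R, ⟨hMR, hLR, hRr⟩, hR⟩ : ∃ R : ℝ,
      (M * R ^ 2 < b / 2 ∧ L * R ^ 2 < 1 / 2 ∧ R < r₀ / 2) ∧ 0 < R := by
    have small : ∀ {φ : ℝ → ℝ} {a : ℝ}, Continuous φ → φ 0 < a →
        ∀ᶠ R in nhdsWithin (0:ℝ) (Ioi 0), φ R < a := fun hφ h0 =>
      ((hφ.tendsto 0).mono_left nhdsWithin_le_nhds).eventually_lt_const h0
    exact ((small (by fun_prop) (by simpa using hb)).and
      ((small (by fun_prop) (by simp)).and
        (small (φ := fun R => R) (by fun_prop) (by simpa using hr₀))) |>.and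
          self_mem_nhdsWithin).exists
  have hIcc : Icc 0 R ⊆ Icc 0 (r₀ / 2) := Icc_subset_Icc_right hRr.le
  obtain ⟨g, hg, hfix⟩ := exists_radialPotential_fixedPoint m (by positivity) hR.le
    (hfC'.mono (prod_mono hIcc subset_rfl))
    (fun r hr x hx => hM (r, x) ⟨hIcc hr, hx⟩) hL0 (fun r hr => hL r (hIcc hr)) hMR.le hLR.le
  have hsol := isC2Sol_radialPotential (b := b) (R := R) hg
    (fun r hr => closedBall_subset_ball hcb (hfix r (Ico_subset_Icc_self hr)).1)
    (fun r hr => (hfix r (Ico_subset_Icc_self hr)).2)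
  exact ⟨R, hR, by linarith, _, hsol, fun w hw => hsol.eqOn (by omega)
    (fun ρ hρ' c hc => exists_lipschitz_bound hDf hDfC (by linarith) hc) hw⟩
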